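/- For every complex number q with 0 < |q| < 1, one has ∑_{i,j,k,l ≥ 0} q^{2i²+2j²+2k²+2l²−2ij−2ik−2il+2jk+2jl−i+j+k+2l} / ((q²;q²)_i (q²;q²)_j (q²;q²)_k (q²;q²)_l) = J_6² / (J_1 J_3). -/

import Mathlib

open scoped BigOperators

/-- The infinite q-Pochhammer symbol `(a; q)_∞ = ∏_{k=0}^∞ (1 - a q^k)`. -/
noncomputable def qPochInf (a q : ℂ) : ℂ := ∏' n : ℕ, (1 - a * q ^ n)

/-- The finite q-Pochhammer symbol `(a; q)_n = ∏_{k=0}^{n-1} (1 - a q^k)`. -/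
noncomputable def qPoch (a q : ℂ) (n : ℕ) : ℂ :=
  Finset.prod (Finset.range n) (fun k => 1 - a * q ^ k)

/-- `J_m = (q^m; q^m)_∞`. -/
noncomputable def J (q : ℂ) (m : ℕ) : ℂ := qPochInf (q ^ m) (q ^ m)

/-- `J_{a,m} = (q^a; q^m)_∞ (q^{m-a}; q^m)_∞ (q^m; q^m)_∞`. -/
noncomputable def Jam (q : ℂ) (a m : ℕ) : ℂ :=
  qPochInf (q ^ a) (q ^ m) * qPochInf (q ^ (m - a)) (q ^ m) * qPochInf (q ^ m) (q ^ m)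

open Filter Topology

noncomputable def cc (Q : ℂ) (n : ℤ) : ℂ := if n < 0 then 0 else (qPoch Q Q n.toNat)⁻¹

def TT (n : ℤ) : ℤ := n * (n + 1) / 2

lemma two_TT (n : ℤ) : 2 * TT n = n * (n + 1) :=
  Int.mul_ediv_cancel' (Int.even_mul_succ_self n).two_dvd

lemma cc_neg (Q : ℂ) {n : ℤ} (h : n < 0) : cc Q n = 0 := by simp [cc, h]

lemma cc_nat (Q : ℂ) (n : ℕ) : cc Q n = (qPoch Q Q n)⁻¹ := by
  simp [cc]

lemma cc_zero (Q : ℂ) : cc Q 0 = 1 := by simp [cc, qPoch]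

lemma fac_ne {Q : ℂ} (h1 : ‖Q‖ < 1) (n : ℕ) : 1 - Q * Q ^ n ≠ 0 := by
  intro h
  have h2 : Q ^ (n+1) = 1 := by rw [pow_succ']; linear_combination -h
  have h3 : ‖Q‖ ^ (n+1) = 1 := by rw [← norm_pow, h2, norm_one]
  have := pow_lt_one₀ (norm_nonneg Q) h1 (Nat.succ_ne_zero n)
  simp only [Nat.succ_eq_add_one] at this
  linarith

lemma qPoch_ne {Q : ℂ} (h1 : ‖Q‖ < 1) (n : ℕ) : qPoch Q Q n ≠ 0 :=
  Finset.prod_ne_zero_iff.mpr fun k _ => fac_ne h1 k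

lemma cc_rec {Q : ℂ} (h1 : ‖Q‖ < 1) (n : ℤ) :
    cc Q (n - 1) = (1 - Q ^ n) * cc Q n := by
  rcases lt_trichotomy n 0 with h | h | h
  · rw [cc_neg Q h, cc_neg Q (by omega)]; simp
  · subst h; rw [cc_neg Q (by omega)]; simp
  · obtain ⟨m, rfl⟩ : ∃ m : ℕ, n = ((m + 1 : ℕ) : ℤ) := ⟨(n-1).toNat, by omega⟩
    have : (((m + 1 : ℕ) : ℤ) - 1) = (m : ℤ) := by push_cast; ring
    rw [this, cc_nat, cc_nat, zpow_natCast, qPoch, qPoch, Finset.prod_range_succ]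
    have := fac_ne h1 m
    rw [mul_inv, pow_succ']
    field_simp

lemma summ_geom {Q : ℂ} (h1 : ‖Q‖ < 1) : Summable fun n : ℕ => ‖-(Q * Q ^ n)‖ := by
  simp only [norm_neg, norm_mul, norm_pow]
  exact (summable_geometric_of_lt_one (norm_nonneg _) h1).mul_left _

lemma mult_P {Q : ℂ} (h1 : ‖Q‖ < 1) : Multipliable fun n : ℕ => (1 - Q * Q ^ n) := by
  simpa [sub_eq_add_neg] using multipliable_one_add_of_summable (summ_geom h1)

lemma qInf_ne {Q : ℂ} (h1 : ‖Q‖ < 1) : qPochInf Q Q ≠ 0 := by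
  have := tprod_one_add_ne_zero_of_summable (f := fun n : ℕ => -(Q * Q ^ n))
    (fun n => by simpa [sub_eq_add_neg] using fac_ne h1 n) (summ_geom h1)
  simpa [qPochInf, sub_eq_add_neg] using this

lemma cc_tendsto {Q : ℂ} (h1 : ‖Q‖ < 1) :
    Tendsto (fun n : ℕ => cc Q n) atTop (𝓝 (qPochInf Q Q)⁻¹) := by
  simp only [cc_nat]
  exact ((mult_P h1).hasProd.tendsto_prod_nat).inv₀ (qInf_ne h1)

lemma cc_bdd {Q : ℂ} (h1 : ‖Q‖ < 1) : ∃ C : ℝ, 0 ≤ C ∧ ∀ n : ℤ, ‖cc Q n‖ ≤ C := by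
  obtain ⟨C, hC⟩ := (cc_tendsto h1).norm.bddAbove_range
  refine ⟨max C 0, le_max_right _ _, fun n => ?_⟩
  rcases lt_or_ge n 0 with h | h
  · rw [cc_neg Q h]; simp
  · obtain ⟨m, rfl⟩ := Int.eq_ofNat_of_zero_le h
    exact (hC ⟨m, rfl⟩).trans (le_max_left _ _)

lemma geoZ {x : ℝ} (h0 : 0 < x) (h1 : x < 1) : Summable fun n : ℤ => x ^ |n| := by
  apply Summable.of_nat_of_neg <;>
  simpa using summable_geometric_of_lt_one h0.le h1

lemma geoZ2 {x : ℝ} (h0 : 0 < x) (h1 : x < 1) :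
    Summable fun p : ℤ × ℤ => x ^ (|p.1| + |p.2|) := by
  have := (geoZ h0 h1).mul_of_nonneg (geoZ h0 h1) (fun n => by positivity) (fun n => by positivity)
  refine this.congr fun p => ?_
  rw [zpow_add₀ h0.ne']

lemma geoZ4 {x : ℝ} (h0 : 0 < x) (h1 : x < 1) :
    Summable fun p : ((ℤ × ℤ) × ℤ) × ℤ => x ^ (|p.1.1.1| + |p.1.1.2| + |p.1.2| + |p.2|) := by
  have h3 := (geoZ2 h0 h1).mul_of_nonneg (geoZ h0 h1) (fun n => by positivity) (fun n => by positivity)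
  have := h3.mul_of_nonneg (geoZ h0 h1) (fun n => by positivity) (fun n => by positivity)
  refine this.congr fun p => ?_
  simp only [zpow_add₀ h0.ne']

lemma summ_gen {ι : Type*} {q : ℂ} (h0 : 0 < ‖q‖) (h1 : ‖q‖ < 1) (f h : ι → ℤ) (g : ι → ℂ)
    (C : ℝ) (M : ℤ) (hg : ∀ p, ‖g p‖ ≤ C) (hf : ∀ p, h p - M ≤ f p)
    (hs : Summable fun p => ‖q‖ ^ h p) : Summable fun p => q ^ f p * g p := by
  refine Summable.of_norm_bounded (hs.mul_right (‖q‖ ^ (-M) * C)) fun p => ?_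
  rw [norm_mul, norm_zpow, ← mul_assoc, ← zpow_add₀ h0.ne']
  have : ‖q‖ ^ f p ≤ ‖q‖ ^ (h p + -M) := zpow_le_zpow_right_of_le_one₀ h0 h1.le (by linarith [hf p])
  gcongr
  exact hg p

lemma int_even_odd {f : ℤ → ℂ} (hf : Summable f) :
    ∑' n, f n = ∑' n, f (2 * n) + ∑' n, f (2 * n + 1) := by
  have i1 : Function.Injective (fun n : ℤ => 2 * n) := fun a b h => by simpa using h
  have i2 : Function.Injective (fun n : ℤ => 2 * n + 1) := fun a b h => by simpa using h
  have h1 := (i1.hasSum_range_iff (f := f)).2 (hf.comp_injective i1).hasSum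
  have h2 := (i2.hasSum_range_iff (f := f)).2 (hf.comp_injective i2).hasSum
  refine (HasSum.add_isCompl ?_ h1 h2).tsum_eq
  rw [isCompl_iff, Set.disjoint_iff, codisjoint_iff]
  constructor
  · rintro x ⟨⟨a, rfl⟩, ⟨b, hb⟩⟩
    simp only at hb; omega
  · ext x
    simp only [Set.sup_eq_union, Set.mem_union, Set.mem_range, Set.top_eq_univ, Set.mem_univ, iff_true]
    rcases Int.even_or_odd' x with ⟨k, h | h⟩
    · exact Or.inl ⟨k, h.symm⟩
    · exact Or.inr ⟨k, h.symm⟩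

lemma quad_bd (b d i : ℤ) : |i| - ((|b| + 1) ^ 2 - d) ≤ i * i + b * i + d := by
  have h1 : -(|b| * |i|) ≤ b * i := by rw [← abs_mul]; exact neg_abs_le _
  have h2 : i * i = |i| * |i| := (abs_mul_abs_self i).symm
  have h3 := abs_nonneg b
  have h4 := abs_nonneg i
  nlinarith [sq_nonneg (2 * |i| - (|b| + 1)), sq_nonneg (|b| + 1)]

lemma summ_quad {Q : ℂ} (h0 : 0 < ‖Q‖) (h1 : ‖Q‖ < 1) (b d : ℤ) (f : ℤ → ℤ) (g : ℤ → ℂ)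
    (hf : ∀ i, f i = i * i + b * i + d) (C : ℝ) (hg : ∀ i, ‖g i‖ ≤ C) :
    Summable fun i => Q ^ f i * g i :=
  summ_gen h0 h1 f (fun i => |i|) g C _ hg (fun i => by rw [hf]; exact quad_bd b d i) (geoZ h0 h1)

lemma cc2_bdd {Q : ℂ} (h1 : ‖Q‖ < 1) : ∃ C : ℝ, ∀ n m : ℤ, ‖cc Q n * cc Q m‖ ≤ C := by
  obtain ⟨C, hC0, hC⟩ := cc_bdd h1
  exact ⟨C * C, fun n m => by rw [norm_mul]; gcongr <;> apply hC⟩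

lemma summ_cc {Q : ℂ} (h0 : 0 < ‖Q‖) (h1 : ‖Q‖ < 1) (b d : ℤ) (f u v : ℤ → ℤ)
    (hf : ∀ i, f i = i * i + b * i + d) :
    Summable fun i => Q ^ f i * (cc Q (u i) * cc Q (v i)) := by
  obtain ⟨C, hC⟩ := cc2_bdd h1
  exact summ_quad h0 h1 b d f _ hf C fun i => hC _ _

noncomputable def ES (Q : ℂ) (s : ℤ) : ℂ := ∑' i : ℤ, Q ^ (i * (i + s)) * (cc Q i * cc Q (i + s))
noncomputable def DS (Q : ℂ) (s : ℤ) : ℂ :=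
  ∑' i : ℤ, Q ^ (i * (i + s) + i) * (cc Q i * cc Q (i + s))
noncomputable def GS (Q : ℂ) (s : ℤ) : ℂ :=
  ∑' i : ℤ, Q ^ (i * (i + s)) * (cc Q i * cc Q (i + s + 1))

lemma ES1 {Q : ℂ} (h0 : 0 < ‖Q‖) (h1 : ‖Q‖ < 1) (s : ℤ) :
    ES Q s = GS Q s - Q ^ (s + 1) * ES Q (s + 1) := by
  have hQ : Q ≠ 0 := norm_pos_iff.mp h0
  rw [ES, GS, ES, ← tsum_mul_left, ← Summable.tsum_sub]
  · refine tsum_congr fun i => ?_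
    have := cc_rec h1 (i + s + 1)
    rw [show i + s + 1 - 1 = i + s by ring] at this
    rw [this, show i + (s + 1) = i + s + 1 by ring, show i * (i + s + 1) = i * (i + s) + i by ring,
      zpow_add₀ hQ _ i, show i + s + 1 = i + (s + 1) by ring, zpow_add₀ hQ i]
    ring
  · exact summ_cc h0 h1 s 0 _ (fun i => i) _ fun i => by ring
  · exact (summ_cc h0 h1 (s+1) 0 _ (fun i => i) _ fun i => by ring).mul_left _

lemma ES2 {Q : ℂ} (h0 : 0 < ‖Q‖) (h1 : ‖Q‖ < 1) (s : ℤ) :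
    ES Q (s + 1) = GS Q s - Q ^ (s + 1) * ES Q (s + 2) := by
  have hQ : Q ≠ 0 := norm_pos_iff.mp h0
  have key : Q ^ (s + 1) * ES Q (s + 2) =
      ∑' i : ℤ, Q ^ (i * (i + s)) * (cc Q (i - 1) * cc Q (i + s + 1)) := by
    rw [← (Equiv.addRight (1 : ℤ)).tsum_eq, ES, ← tsum_mul_left]
    refine tsum_congr fun i => ?_
    simp only [Equiv.coe_addRight]
    rw [← mul_assoc, ← zpow_add₀ hQ]
    congr 3 <;> ring_nf
  rw [key, ES, GS, ← Summable.tsum_sub]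
  · refine tsum_congr fun i => ?_
    rw [cc_rec h1, show i + (s + 1) = i + s + 1 by ring, show i * (i + s + 1) = i * (i + s) + i by ring,
      zpow_add₀ hQ _ i]
    ring
  · exact summ_cc h0 h1 s 0 _ (fun i => i) _ fun i => by ring
  · exact summ_cc h0 h1 s 0 _ (fun i => i - 1) _ fun i => by ring

lemma ED {Q : ℂ} (h0 : 0 < ‖Q‖) (h1 : ‖Q‖ < 1) (s : ℤ) :
    ES Q s = DS Q s + Q ^ (s + 1) * DS Q (s + 1) := by
  have hQ : Q ≠ 0 := norm_pos_iff.mp h0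
  have key : Q ^ (s + 1) * DS Q (s + 1) =
      ∑' i : ℤ, Q ^ (i * (i + s)) * (cc Q (i - 1) * cc Q (i + s)) := by
    rw [← (Equiv.addRight (1 : ℤ)).tsum_eq, DS, ← tsum_mul_left]
    refine tsum_congr fun i => ?_
    simp only [Equiv.coe_addRight]
    rw [← mul_assoc, ← zpow_add₀ hQ]
    congr 3 <;> ring_nf
  rw [key, ES, DS, ← Summable.tsum_add]
  · refine tsum_congr fun i => ?_
    rw [cc_rec h1, zpow_add₀ hQ _ i]
    ring
  · exact summ_cc h0 h1 (s+1) 0 _ (fun i => i) _ fun i => by ring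
  · exact summ_cc h0 h1 s 0 _ (fun i => i - 1) _ fun i => by ring

lemma DS_neg {Q : ℂ} (h0 : 0 < ‖Q‖) (s : ℤ) : DS Q (-s) = Q ^ s * DS Q s := by
  have hQ : Q ≠ 0 := norm_pos_iff.mp h0
  rw [DS, ← (Equiv.addRight s).tsum_eq, DS, ← tsum_mul_left]
  refine tsum_congr fun i => ?_
  simp only [Equiv.coe_addRight]
  rw [← mul_assoc (Q ^ s), ← zpow_add₀ hQ, mul_comm (cc Q i), add_neg_cancel_right,
    show (i + s) * i + (i + s) = s + (i * (i + s) + i) by ring]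

lemma ES_tendsto {Q : ℂ} (h0 : 0 < ‖Q‖) (h1 : ‖Q‖ < 1) :
    Tendsto (fun n : ℕ => ES Q n) atTop (𝓝 (qPochInf Q Q)⁻¹) := by
  obtain ⟨C, hC⟩ := cc2_bdd h1
  have hC0 : 0 ≤ C := (norm_nonneg _).trans (hC 0 0)
  have := tendsto_tsum_of_dominated_convergence (𝓕 := (atTop : Filter ℕ))
    (f := fun n i => Q ^ (i * (i + (n : ℤ))) * (cc Q i * cc Q (i + n)))
    (g := fun i : ℤ => if i = 0 then (qPochInf Q Q)⁻¹ else 0)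
    (bound := fun i => ‖Q‖ ^ |i| * C) ((geoZ h0 h1).mul_right _) ?_ ?_
  · rw [tsum_ite_eq] at this
    exact this
  · intro i
    rcases lt_trichotomy i 0 with h | h | h
    · simp [cc_neg Q h, h.ne]
    · subst h
      simpa [cc_zero] using cc_tendsto h1
    · rw [if_neg h.ne']
      have hl : Tendsto (fun n : ℕ => ‖Q‖ ^ n * C) atTop (𝓝 0) := by
        simpa using (tendsto_pow_atTop_nhds_zero_of_lt_one h0.le h1).mul_const C
      refine squeeze_zero_norm (fun n => ?_) hl
      rw [norm_mul, norm_zpow, ← zpow_natCast]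
      have : ‖Q‖ ^ (i * (i + n)) ≤ ‖Q‖ ^ (n : ℤ) :=
        zpow_le_zpow_right_of_le_one₀ h0 h1.le (by nlinarith)
      gcongr
      exact hC _ _
  · refine Eventually.of_forall fun n i => ?_
    rcases lt_or_ge i 0 with h | h
    · simp only [cc_neg Q h, zero_mul, mul_zero, norm_zero]; positivity
    · rw [norm_mul, norm_zpow, abs_of_nonneg h]
      have : ‖Q‖ ^ (i * (i + n)) ≤ ‖Q‖ ^ i :=
        zpow_le_zpow_right_of_le_one₀ h0 h1.le (by
          rcases h.eq_or_lt with h | h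
          · simp [← h]
          · nlinarith)
      gcongr
      exact hC _ _

lemma ES_eq {Q : ℂ} (h0 : 0 < ‖Q‖) (h1 : ‖Q‖ < 1) (s : ℤ) : ES Q s = (qPochInf Q Q)⁻¹ := by
  have hrec : ∀ s, ES Q s - ES Q (s + 1) = - Q ^ (s + 1) * (ES Q (s + 1) - ES Q (s + 2)) := by
    intro s
    linear_combination ES1 h0 h1 s - ES2 h0 h1 s
  set d : ℤ → ℂ := fun s => ES Q s - ES Q (s + 1) with hd
  have hrec' : ∀ s, d s = - Q ^ (s + 1) * d (s + 1) := by
    intro s; simp only [hd]; rw [hrec, show s + 1 + 1 = s + 2 by ring]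
  have hlim : Tendsto (fun n : ℕ => ‖d n‖) atTop (𝓝 0) := by
    have a := ES_tendsto h0 h1
    have b := (tendsto_add_atTop_iff_nat 1).2 a
    simpa [hd] using (a.sub b).norm
  have hmono : Monotone (fun n : ℕ => ‖d n‖) := by
    refine monotone_nat_of_le_succ fun n => ?_
    rw [hrec', norm_mul, norm_neg]
    push_cast
    have : ‖Q ^ ((n : ℤ) + 1)‖ ≤ 1 := by
      rw [norm_zpow]
      simpa using zpow_le_zpow_right_of_le_one₀ h0 h1.le (show (0:ℤ) ≤ n + 1 by positivity)
    exact mul_le_of_le_one_left (norm_nonneg _) this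
  have hz : ∀ n : ℕ, d n = 0 := fun n => by
    have := hmono.ge_of_tendsto hlim n
    exact norm_le_zero_iff.mp this
  have hall : ∀ s, d s = 0 := by
    intro s
    rcases lt_or_ge s 0 with h | h
    · obtain ⟨m, rfl⟩ : ∃ m : ℕ, s = -(m : ℤ) := ⟨s.natAbs, by omega⟩
      clear h
      induction m with
      | zero => simpa using hz 0
      | succ m ih =>
        rw [hrec', show -((m + 1 : ℕ) : ℤ) + 1 = -(m : ℤ) by push_cast; ring, ih, mul_zero]
    · obtain ⟨m, rfl⟩ := Int.eq_ofNat_of_zero_le h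
      exact hz m
  have hstep : ∀ s, ES Q (s + 1) = ES Q s := fun s => (sub_eq_zero.mp (hall s)).symm
  have hconst : ∀ n : ℕ, ES Q (s + n) = ES Q s := by
    intro n
    induction n with
    | zero => simp
    | succ n ih => rw [← ih, ← hstep (s + n)]; push_cast; ring_nf
  have hN : ∀ n : ℕ, ES Q n = ES Q 0 := by
    intro n
    induction n with
    | zero => simp
    | succ n ih => rw [← ih, ← hstep n]; push_cast; ring_nf
  have h00 : ES Q 0 = (qPochInf Q Q)⁻¹ := by
    refine tendsto_nhds_unique ?_ (ES_tendsto h0 h1)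
    simp only [hN]; exact tendsto_const_nhds
  rw [← h00]
  rcases lt_or_ge s 0 with h | h
  · rw [← hconst s.natAbs]; congr 1; omega
  · obtain ⟨m, rfl⟩ := Int.eq_ofNat_of_zero_le h
    exact hN m

lemma TT_bd (b i : ℤ) : |i| - (2 * |b| + 3) ^ 2 ≤ TT i + b * i := by
  have h0 := two_TT i
  have h1 : -(|b| * |i|) ≤ b * i := by rw [← abs_mul]; exact neg_abs_le _
  have h2 : i * i = |i| * |i| := (abs_mul_abs_self i).symm
  have h3 := abs_nonneg b
  have h4 := abs_nonneg i
  have h5 := neg_abs_le i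
  nlinarith [sq_nonneg (|i| - (2 * |b| + 3)), sq_nonneg (2 * |b| + 3)]

lemma summ_TT {q : ℂ} (h0 : 0 < ‖q‖) (h1 : ‖q‖ < 1) (b : ℤ) (u : ℤ → ℤ) :
    Summable fun i => q ^ (TT i + b * i) * cc q (u i) := by
  obtain ⟨C, _, hC⟩ := cc_bdd h1
  exact summ_gen h0 h1 _ (fun i => |i|) _ C _ (fun i => hC _) (fun i => TT_bd b i) (geoZ h0 h1)

noncomputable def FS (q : ℂ) (n : ℤ) : ℂ := ∑' j : ℤ, q ^ (TT j + n * j) * cc q j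

lemma FS_rec {q : ℂ} (h0 : 0 < ‖q‖) (h1 : ‖q‖ < 1) (n : ℤ) :
    FS q n = (1 + q ^ (n + 1)) * FS q (n + 1) := by
  have hq : q ≠ 0 := norm_pos_iff.mp h0
  have key : q ^ (n + 1) * FS q (n + 1) = ∑' j : ℤ, q ^ (TT j + n * j) * cc q (j - 1) := by
    rw [← (Equiv.addRight (1 : ℤ)).tsum_eq, FS, ← tsum_mul_left]
    refine tsum_congr fun i => ?_
    simp only [Equiv.coe_addRight]
    rw [← mul_assoc, ← zpow_add₀ hq]
    have e : n + 1 + (TT i + (n + 1) * i) = TT (i + 1) + n * (i + 1) := by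
      linarith [two_TT i, two_TT (i + 1)]
    rw [e, add_sub_cancel_right]
  rw [add_mul, key, one_mul, FS, FS, ← Summable.tsum_add]
  · refine tsum_congr fun i => ?_
    rw [cc_rec h1, show TT i + (n + 1) * i = TT i + n * i + i by ring, zpow_add₀ hq _ i]
    ring
  · exact summ_TT h0 h1 (n + 1) _
  · exact summ_TT h0 h1 n _

lemma FS_tendsto {q : ℂ} (h0 : 0 < ‖q‖) (h1 : ‖q‖ < 1) :
    Tendsto (fun n : ℕ => FS q n) atTop (𝓝 1) := by
  obtain ⟨C, hC0, hC⟩ := cc_bdd h1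
  have hT : ∀ i : ℤ, 0 ≤ i → i ≤ TT i := fun i hi => by
    have := two_TT i
    rcases hi.eq_or_lt with h | h
    · subst h; omega
    · nlinarith
  have := tendsto_tsum_of_dominated_convergence (𝓕 := (atTop : Filter ℕ))
    (f := fun n i => q ^ (TT i + (n : ℤ) * i) * cc q i)
    (g := fun i : ℤ => if i = 0 then 1 else 0)
    (bound := fun i => ‖q‖ ^ |i| * C) ((geoZ h0 h1).mul_right _) ?_ ?_
  · rw [tsum_ite_eq] at this
    exact this
  · intro i
    rcases lt_trichotomy i 0 with h | h | h
    · simp [cc_neg q h, h.ne]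
    · subst h
      simp [cc_zero, TT]
    · rw [if_neg h.ne']
      have hl : Tendsto (fun n : ℕ => ‖q‖ ^ n * C) atTop (𝓝 0) := by
        simpa using (tendsto_pow_atTop_nhds_zero_of_lt_one h0.le h1).mul_const C
      refine squeeze_zero_norm (fun n => ?_) hl
      rw [norm_mul, norm_zpow, ← zpow_natCast]
      have : ‖q‖ ^ (TT i + n * i) ≤ ‖q‖ ^ (n : ℤ) :=
        zpow_le_zpow_right_of_le_one₀ h0 h1.le (by nlinarith [hT i h.le])
      gcongr
      exact hC _
  · refine Eventually.of_forall fun n i => ?_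
    rcases lt_or_ge i 0 with h | h
    · simp only [cc_neg q h, mul_zero, norm_zero]; positivity
    · rw [norm_mul, norm_zpow, abs_of_nonneg h]
      have : ‖q‖ ^ (TT i + n * i) ≤ ‖q‖ ^ i :=
        zpow_le_zpow_right_of_le_one₀ h0 h1.le (by nlinarith [hT i h, mul_nonneg (Int.natCast_nonneg n) h])
      gcongr
      exact hC _

lemma FS_zero {q : ℂ} (h0 : 0 < ‖q‖) (h1 : ‖q‖ < 1) :
    qPochInf q q * FS q 0 = qPochInf (q ^ 2) (q ^ 2) := by
  have h2 : ‖q ^ 2‖ < 1 := by rw [norm_pow]; exact pow_lt_one₀ h0.le h1 two_ne_zero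
  have hfin : ∀ n : ℕ, qPoch q q n * FS q 0 = qPoch (q ^ 2) (q ^ 2) n * FS q n := by
    intro n
    induction n with
    | zero => simp [qPoch]
    | succ n ih =>
      have e1 : qPoch q q (n + 1) = qPoch q q n * (1 - q * q ^ n) := by
        rw [qPoch, qPoch, Finset.prod_range_succ]
      have e2 : qPoch (q^2) (q^2) (n + 1) = qPoch (q^2) (q^2) n * (1 - q^2 * (q^2) ^ n) := by
        rw [qPoch, qPoch, Finset.prod_range_succ]
      have e3 := FS_rec h0 h1 n
      rw [show ((n : ℤ) + 1) = ((n + 1 : ℕ) : ℤ) by push_cast; rfl, zpow_natCast, pow_succ'] at e3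
      have e4 : (q ^ 2) ^ n = q ^ n * q ^ n := by rw [← pow_mul, ← pow_add]; congr 1; ring
      rw [e1, e2, e4]
      rw [e3] at ih
      linear_combination (1 - q * q ^ n) * ih
  have l1 := ((mult_P h1).hasProd.tendsto_prod_nat).mul_const (FS q 0)
  have l2 := ((mult_P h2).hasProd.tendsto_prod_nat).mul (FS_tendsto h0 h1)
  rw [mul_one] at l2
  refine tendsto_nhds_unique l1 (l2.congr fun n => ?_)
  exact (hfin n).symm

noncomputable def TH (q : ℂ) : ℂ := ∑' s : ℤ, q ^ (s * (2 * s + 1))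

lemma summ_T {q : ℂ} (h0 : 0 < ‖q‖) (h1 : ‖q‖ < 1) : Summable fun n : ℤ => q ^ TT n := by
  have := summ_gen h0 h1 TT (fun i => |i|) (fun _ => 1) 1 _ (fun i => by simp)
    (fun i => by simpa using TT_bd 0 i) (geoZ h0 h1)
  simpa using this

lemma TT_even (s : ℤ) : TT (2 * s) = s * (2 * s + 1) := by linarith [two_TT (2 * s)]

lemma TH_two {q : ℂ} (h0 : 0 < ‖q‖) (h1 : ‖q‖ < 1) : ∑' n : ℤ, q ^ TT n = 2 * TH q := by
  rw [int_even_odd (summ_T h0 h1), two_mul]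
  congr 1
  · exact tsum_congr fun s => by rw [TT_even]
  · let e : ℤ ≃ ℤ := (Equiv.neg ℤ).trans (Equiv.addRight (-1))
    rw [← e.tsum_eq]
    refine tsum_congr fun s => ?_
    have : e s = -s + -1 := rfl
    rw [this]
    congr 1
    linarith [two_TT (2 * (-s + -1) + 1)]

lemma TH_eq {q : ℂ} (h0 : 0 < ‖q‖) (h1 : ‖q‖ < 1) :
    TH q = qPochInf (q ^ 2) (q ^ 2) ^ 2 / qPochInf q q := by
  have hq : q ≠ 0 := norm_pos_iff.mp h0
  have hP := qInf_ne h1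
  have hF := FS_zero h0 h1
  have hm1 := FS_rec h0 h1 (-1)
  norm_num at hm1
  have s1 := summ_TT h0 h1 (-1) (fun i => i)
  have s2 := summ_TT h0 h1 0 (fun i => i)
  have hprod : FS q (-1) * FS q 0 = (qPochInf q q)⁻¹ * ∑' n : ℤ, q ^ TT n := by
    rw [FS, FS, tsum_mul_tsum_of_summable_norm s1.norm s2.norm]
    have s3 := summable_mul_of_summable_norm s1.norm s2.norm
    let e : ℤ × ℤ ≃ ℤ × ℤ :=
      { toFun := fun p => (p.2, p.2 + p.1)
        invFun := fun p => (p.2 - p.1, p.1)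
        left_inv := fun p => by ext <;> simp
        right_inv := fun p => by ext <;> simp }
    have s4 := e.summable_iff.2 s3
    rw [← e.tsum_eq]
    refine (Summable.tsum_prod s4).trans ?_
    rw [← tsum_mul_left]
    refine tsum_congr fun n => ?_
    rw [← ES_eq h0 h1 n, ES, ← tsum_mul_right]
    refine tsum_congr fun i => ?_
    have he : e (n, i) = (i, i + n) := rfl
    simp only [Function.comp, he]
    have : TT i + -1 * i + (TT (i + n) + 0 * (i + n)) = i * (i + n) + TT n := by
      linarith [two_TT i, two_TT n, two_TT (i + n)]
    have h3 : q ^ (TT i + -1 * i) * q ^ (TT (i + n) + 0 * (i + n)) = q ^ (i * (i + n)) * q ^ TT n := by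
      rw [← zpow_add₀ hq, ← zpow_add₀ hq, this]
    linear_combination (cc q i * cc q (i + n)) * h3
  rw [TH_two h0 h1, hm1] at hprod
  rw [← hF]
  field_simp at hprod ⊢
  linear_combination -hprod

lemma sq_zpow (q : ℂ) (n : ℤ) : (q ^ 2) ^ n = q ^ (2 * n) := by
  rw [zpow_mul]; norm_cast

lemma abs_sq_bd (x m : ℤ) : 2 * m * |x| ≤ x ^ 2 + m ^ 2 := by
  rw [← sq_abs x]; nlinarith [sq_nonneg (|x| - m)]

lemma E_bd (k l s i : ℤ) : |k| + |l| + |s| + |i| - 10 ≤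
    2*k^2 + k + 2*l^2 + 2*l + 2*s^2 + s + 2*s*(k+l) + 2*(i*(i+s)) := by
  have hh : ∀ x : ℤ, 2 * |x| ≤ |2 * x + s| + |s| := fun x => by
    have := abs_sub (2 * x + s) s
    rw [add_sub_cancel_right, abs_mul] at this
    simpa using this
  have a := hh i
  have b := hh k
  have c := hh l
  have a2 := abs_sq_bd (2 * i + s) 1
  have b2 := abs_sq_bd (2 * k + s) 1
  have c2 := abs_sq_bd (2 * l + s) 2
  have s2 := abs_sq_bd s 3
  have b3 := neg_abs_le (2 * k + s)
  have c3 := neg_abs_le (2 * l + s)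
  have s3 := le_abs_self s
  have := abs_nonneg (2 * i + s)
  have := abs_nonneg (2 * l + s)
  nlinarith

lemma theta_shift {q : ℂ} (hq : q ≠ 0) (N : ℤ) :
    ∑' s : ℤ, q ^ (2*s^2 + s + 2*s*N) = q ^ (-TT N) * TH q := by
  rw [TH, ← tsum_mul_left]
  rcases Int.even_or_odd' N with ⟨m, h | h⟩
  · rw [← (Equiv.addRight (-m)).tsum_eq]
    refine tsum_congr fun s => ?_
    simp only [Equiv.coe_addRight]
    rw [← zpow_add₀ hq]
    congr 1
    have := two_TT N
    subst h
    linarith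
  · let e : ℤ ≃ ℤ := (Equiv.neg ℤ).trans (Equiv.addRight (-(m + 1)))
    rw [← e.tsum_eq]
    refine tsum_congr fun s => ?_
    have he : e s = -s + -(m + 1) := rfl
    rw [he, ← zpow_add₀ hq]
    congr 1
    have := two_TT N
    subst h
    linarith

lemma stepE {q : ℂ} (h0 : 0 < ‖q‖) (h1 : ‖q‖ < 1) (K : ℂ)
    (hs : Summable fun s : ℤ => q ^ (s ^ 2 + TT s) * DS (q ^ 2) s * K) :
    ∑' s : ℤ, q ^ (s ^ 2 + TT s) * DS (q ^ 2) s * K =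
      (qPochInf (q ^ 2) (q ^ 2))⁻¹ * K * TH (q ^ 3) := by
  have hq : q ≠ 0 := norm_pos_iff.mp h0
  have h20 : 0 < ‖q ^ 2‖ := by rw [norm_pow]; positivity
  have h21 : ‖q ^ 2‖ < 1 := by rw [norm_pow]; exact pow_lt_one₀ h0.le h1 two_ne_zero
  have i1 : Function.Injective (fun n : ℤ => 2 * (-n)) := fun a b h => by simpa using h
  have i2 : Function.Injective (fun n : ℤ => 2 * n + 1) := fun a b h => by simpa using h
  have s1 := hs.comp_injective i1
  have s2 := hs.comp_injective i2
  rw [int_even_odd hs, ← (Equiv.neg ℤ).tsum_eq, TH, ← tsum_mul_left]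
  refine (Summable.tsum_add s1 s2).symm.trans (tsum_congr fun s => ?_)
  simp only [Function.comp]
  rw [← ES_eq h20 h21 (2 * s), ED h20 h21, show 2 * -s = -(2 * s) by ring, DS_neg h20,
    sq_zpow, sq_zpow]
  have e1 : (q ^ 3) ^ (s * (2 * s + 1)) = q ^ (3 * (s * (2 * s + 1))) := by
    rw [zpow_mul q 3]; norm_cast
  have e2 : q ^ ((-(2 * s)) ^ 2 + TT (-(2 * s))) * q ^ (2 * (2 * s)) = q ^ (3 * (s * (2 * s + 1))) := by
    rw [← zpow_add₀ hq]; congr 1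
    linarith [two_TT (-(2 * s))]
  have e3 : q ^ ((2 * s + 1) ^ 2 + TT (2 * s + 1)) =
      q ^ (2 * (2 * s + 1)) * q ^ (3 * (s * (2 * s + 1))) := by
    rw [← zpow_add₀ hq]; congr 1
    linarith [two_TT (2 * s + 1)]
  rw [e1, e3]
  linear_combination (DS (q ^ 2) (2 * s) * K) * e2

theorem stmt_9 (q : ℂ) (h0 : 0 < ‖q‖) (h1 : ‖q‖ < 1) :
    (∑' p : ℕ × ℕ × ℕ × ℕ,
      (fun (i j k l : ℕ) =>
        q ^ ((2*(i:ℤ)^2 + 2*(j:ℤ)^2 + 2*(k:ℤ)^2 + 2*(l:ℤ)^2 - 2*(i:ℤ)*(j:ℤ) - 2*(i:ℤ)*(k:ℤ) - 2*(i:ℤ)*(l:ℤ) + 2*(j:ℤ)*(k:ℤ) + 2*(j:ℤ)*(l:ℤ) - (i:ℤ) + (j:ℤ) + (k:ℤ) + 2*(l:ℤ)) : ℤ) /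
          (qPoch (q ^ 2) (q ^ 2) i * qPoch (q ^ 2) (q ^ 2) j * qPoch (q ^ 2) (q ^ 2) k * qPoch (q ^ 2) (q ^ 2) l))
        p.1 p.2.1 p.2.2.1 p.2.2.2)
    = (J q 6)^2 / (J q 1 * J q 3) := by
  have hq : q ≠ 0 := norm_pos_iff.mp h0
  have h20 : 0 < ‖q ^ 2‖ := by rw [norm_pow]; positivity
  have h21 : ‖q ^ 2‖ < 1 := by rw [norm_pow]; exact pow_lt_one₀ h0.le h1 two_ne_zero
  have h30 : 0 < ‖q ^ 3‖ := by rw [norm_pow]; positivity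
  have h31 : ‖q ^ 3‖ < 1 := by rw [norm_pow]; exact pow_lt_one₀ h0.le h1 three_ne_zero
  set c := cc (q ^ 2) with hc
  let f : ((ℤ × ℤ) × ℤ) × ℤ → ℂ := fun p =>
    q ^ (2*p.1.1.1^2 + p.1.1.1 + 2*p.1.1.2^2 + 2*p.1.1.2 + 2*p.1.2^2 + p.1.2
      + 2*p.1.2*(p.1.1.1+p.1.1.2) + 2*(p.2*(p.2+p.1.2))) *
      ((c p.1.1.1 * c p.1.1.2) * (c p.2 * c (p.2 + p.1.2)))
  have sf : Summable f := by
    obtain ⟨C, hC⟩ := cc2_bdd h21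
    have hC0 : 0 ≤ C := (norm_nonneg _).trans (hC 0 0)
    refine summ_gen h0 h1 _ _ _ (C * C) 10 (fun p => ?_) (fun p => E_bd _ _ _ _) (geoZ4 h0 h1)
    rw [norm_mul]
    gcongr <;> apply hC
  let g : ℕ × ℕ × ℕ × ℕ → ((ℤ × ℤ) × ℤ) × ℤ := fun p =>
    (((p.2.2.1, p.2.2.2), (p.2.1 : ℤ) - p.1), p.1)
  have hg : Function.Injective g := by
    rintro ⟨i, j, k, l⟩ ⟨i', j', k', l'⟩ h
    simp only [g, Prod.mk.injEq] at h ⊢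
    omega
  have hsupp : Function.support f ⊆ Set.range g := by
    rintro ⟨⟨⟨k, l⟩, s⟩, i⟩ hp
    have hp' : f (((k, l), s), i) ≠ 0 := hp
    have nn : ∀ n, c n ≠ 0 → 0 ≤ n := fun n hn => by
      by_contra h
      exact hn (cc_neg _ (by omega))
    have hk := nn k (fun h => hp' (by simp [f, h]))
    have hl := nn l (fun h => hp' (by simp [f, h]))
    have hi := nn i (fun h => hp' (by simp [f, h]))
    have hj := nn (i + s) (fun h => hp' (by simp [f, h]))
    refine ⟨(i.toNat, (i + s).toNat, k.toNat, l.toNat), ?_⟩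
    simp only [g, Prod.mk.injEq]
    omega
  have stepA : (∑' p : ℕ × ℕ × ℕ × ℕ, f (g p)) = ∑' p, f p := hg.tsum_eq hsupp
  set e : ℂ := (qPochInf (q ^ 2) (q ^ 2))⁻¹ with he
  have stepB : ∀ b : (ℤ × ℤ) × ℤ, ∑' i : ℤ, f (b, i) =
      q ^ (2*b.2^2 + b.2 + 2*b.2*(b.1.1+b.1.2)) *
      (q ^ (2*b.1.1^2 + b.1.1 + 2*b.1.2^2 + 2*b.1.2) * (c b.1.1 * c b.1.2) * e) := by
    intro b
    rw [he, ← ES_eq h20 h21 b.2, ES, ← tsum_mul_left, ← tsum_mul_left]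
    refine tsum_congr fun i => ?_
    simp only [f]
    have hz : ∀ A B D X Y Z : ℂ, A = B * D * X → A * (Y * Z) = B * (D * Y * (X * Z)) := by
      intro A B D X Y Z h; rw [h]; ring
    rw [sq_zpow]
    apply hz
    rw [← zpow_add₀ hq, ← zpow_add₀ hq]
    congr 1
    ring
  have sB := sf.prod
  have stepC : ∀ b : ℤ × ℤ, ∑' s : ℤ, ∑' i : ℤ, f ((b, s), i) =
      q ^ (2*b.1^2 + b.1 + 2*b.2^2 + 2*b.2 - TT (b.1 + b.2)) * (c b.1 * c b.2) * (e * TH q) := by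
    intro b
    simp only [stepB]
    rw [tsum_mul_right, theta_shift hq, sub_eq_add_neg, zpow_add₀ hq _ (-TT _)]
    ring
  have sC := sB.prod
  simp only [stepC] at sC
  let e2 : ℤ × ℤ ≃ ℤ × ℤ :=
      { toFun := fun p => (p.2 + p.1, p.2)
        invFun := fun p => (p.1 - p.2, p.2)
        left_inv := fun p => by ext <;> simp
        right_inv := fun p => by ext <;> simp }
  have sD := e2.summable_iff.2 sC
  have stepD : ∀ s : ℤ, ∑' l : ℤ, ((fun b : ℤ × ℤ => q ^ (2*b.1^2 + b.1 + 2*b.2^2 + 2*b.2 - TT (b.1 + b.2)) * (c b.1 * c b.2) * (e * TH q)) ∘ e2) (s, l) = q ^ (s ^ 2 + TT s) * DS (q ^ 2) s * (e * TH q) := by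
    intro s
    rw [DS, ← tsum_mul_left, ← tsum_mul_right]
    refine tsum_congr fun l => ?_
    have h2 : e2 (s, l) = (l + s, l) := rfl
    simp only [Function.comp, h2]
    rw [sq_zpow, ← mul_assoc (q ^ _) (q ^ _), ← zpow_add₀ hq, mul_comm (c (l + s))]
    congr 3
    linarith [two_TT s, two_TT (l + s + l)]
  have sE := sD.prod
  simp only [stepD] at sE
  have main : ∑' p, f p = e * (e * TH q) * TH (q ^ 3) := by
    rw [sf.tsum_prod, sB.tsum_prod]
    simp only [stepC]
    rw [← e2.tsum_eq]
    refine (Summable.tsum_prod sD).trans ?_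
    simp only [stepD]
    exact stepE h0 h1 _ sE
  have first : ∀ p : ℕ × ℕ × ℕ × ℕ, f (g p) = (fun (i j k l : ℕ) =>
        q ^ ((2*(i:ℤ)^2 + 2*(j:ℤ)^2 + 2*(k:ℤ)^2 + 2*(l:ℤ)^2 - 2*(i:ℤ)*(j:ℤ) - 2*(i:ℤ)*(k:ℤ) - 2*(i:ℤ)*(l:ℤ) + 2*(j:ℤ)*(k:ℤ) + 2*(j:ℤ)*(l:ℤ) - (i:ℤ) + (j:ℤ) + (k:ℤ) + 2*(l:ℤ)) : ℤ) /
          (qPoch (q ^ 2) (q ^ 2) i * qPoch (q ^ 2) (q ^ 2) j * qPoch (q ^ 2) (q ^ 2) k * qPoch (q ^ 2) (q ^ 2) l))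
        p.1 p.2.1 p.2.2.1 p.2.2.2 := by
    rintro ⟨i, j, k, l⟩
    simp only [f, g, hc]
    rw [add_sub_cancel, cc_nat, cc_nat, cc_nat, cc_nat, div_eq_mul_inv, mul_inv, mul_inv, mul_inv]
    have : ∀ a b x y z w : ℂ, a = b → a * ((x * y) * (z * w)) = b * (z * w * x * y) := by
      intros; subst_vars; ring
    apply this
    congr 1
    ring
  rw [← tsum_congr first, stepA, main, TH_eq h0 h1, TH_eq h30 h31, he, J, J, J]
  have a1 := qInf_ne h21
  rw [← pow_mul, pow_one]
  field_simp
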